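/- Let γ ∈ (π/2, π] and C > 0 satisfy 2·C·cos(γ/2) + cos γ ≤ 0. Then the derivative of the dimensionless total force is nonnegative on [0, π/4] and vanishes there only at φ = 0: F′(φ) ≥ 0 for all φ ∈ [0, π/4], and F′(φ) > 0 for all φ ∈ (0, π/4]. -/

import Mathlib

/-!
Put `θ = φ + γ` and `h c θ = 2 c cos (θ / 2) + cos θ`. Then
`F' φ / 2 = -h (C cos φ) θ + C sin φ (sin (θ / 2) + C sin φ)`, and for `0 ≤ φ ≤ π / 2`,
`θ ≤ 3 π / 2` the last summand is nonnegative. The hypothesis is `h C γ ≤ 0`, and nonpositivity of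
`h` survives both increasing the angle from `γ` to `θ` and decreasing the coefficient from `C` to
`C cos φ`: on `[0, π]` the function `h` decreases in the angle and increases in the coefficient,
while on `[π, 3 π / 2]` both of its summands are nonpositive.
-/

section TotalForce

open Real Set

/-- The dimensionless total force `F φ` with phase `γ` and parameters `A`, `C`. -/
noncomputable def totalForce (γ A C φ : ℝ) : ℝ :=
  -A * C ^ 2 - 2 * sin (φ + γ) - 4 * C * cos ((φ + γ) / 2) * sin φ
    - (1 / 2) * C ^ 2 * sin (2 * φ) + C ^ 2 * φ

/-- The combination of half-angle and full-angle cosines that controls the sign of the derivative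
of the total force; it is normalized so that `F' 0 = -2 * cosHalfSum C γ`. -/
noncomputable def cosHalfSum (c θ : ℝ) : ℝ :=
  2 * c * cos (θ / 2) + cos θ

variable {γ θ φ c C : ℝ}

theorem antitoneOn_cosHalfSum (hc : 0 ≤ c) : AntitoneOn (cosHalfSum c) (Icc 0 π) := by
  intro γ hγ θ hθ hγθ
  have hhalf : cos (θ / 2) ≤ cos (γ / 2) :=
    cos_le_cos_of_nonneg_of_le_pi (by linarith [hγ.1]) (by linarith [hθ.2, pi_pos]) (by linarith)
  have hfull : cos θ ≤ cos γ := cos_le_cos_of_nonneg_of_le_pi hγ.1 hθ.2 hγθ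
  unfold cosHalfSum
  gcongr

theorem cosHalfSum_nonpos_of_pi_le (hc : 0 ≤ c) (hθ : π ≤ θ) (hθ' : θ ≤ 3 * π / 2) :
    cosHalfSum c θ ≤ 0 := by
  have hhalf : cos (θ / 2) ≤ 0 :=
    cos_nonpos_of_pi_div_two_le_of_le (by linarith) (by linarith [pi_pos])
  have hfull : cos θ ≤ 0 :=
    cos_nonpos_of_pi_div_two_le_of_le (by linarith [pi_pos]) (by linarith)
  exact add_nonpos (mul_nonpos_of_nonneg_of_nonpos (by positivity) hhalf) hfull

theorem cosHalfSum_nonpos_of_le_angle (hc : 0 ≤ c) (hγ : 0 ≤ γ) (hγθ : γ ≤ θ)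
    (hθ : θ ≤ 3 * π / 2) (h : cosHalfSum c γ ≤ 0) : cosHalfSum c θ ≤ 0 := by
  rcases le_total θ π with hθπ | hπθ
  · exact (antitoneOn_cosHalfSum hc ⟨hγ, hγθ.trans hθπ⟩ ⟨hγ.trans hγθ, hθπ⟩ hγθ).trans h
  · exact cosHalfSum_nonpos_of_pi_le hc hπθ hθ

theorem cosHalfSum_nonpos_of_coeff_le (hc : 0 ≤ c) (hcC : c ≤ C) (hθ₀ : 0 ≤ θ)
    (hθ : θ ≤ 3 * π / 2) (h : cosHalfSum C θ ≤ 0) : cosHalfSum c θ ≤ 0 := by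
  rcases le_total θ π with hθπ | hπθ
  · have hhalf : 0 ≤ cos (θ / 2) :=
      cos_nonneg_of_neg_pi_div_two_le_of_le (by linarith [pi_pos]) (by linarith)
    calc cosHalfSum c θ ≤ cosHalfSum C θ := by unfold cosHalfSum; gcongr
      _ ≤ 0 := h
  · exact cosHalfSum_nonpos_of_pi_le hc hπθ hθ

theorem hasDerivAt_totalForce (γ A C φ : ℝ) :
    HasDerivAt (totalForce γ A C)
      (2 * (-cosHalfSum (C * cos φ) (φ + γ)
        + C * sin φ * (sin ((φ + γ) / 2) + C * sin φ))) φ := by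
  have hphase : HasDerivAt (fun φ : ℝ => φ + γ) 1 φ := (hasDerivAt_id φ).add_const γ
  have hdouble : HasDerivAt (fun φ : ℝ => 2 * φ) (2 * 1) φ := (hasDerivAt_id φ).const_mul 2
  have h := ((((hasDerivAt_const φ (-A * C ^ 2)).sub (hphase.sin.const_mul 2)).sub
    (((hphase.div_const 2).cos.const_mul (4 * C)).mul (hasDerivAt_sin φ))).sub
    (hdouble.sin.const_mul ((1 / 2) * C ^ 2))).add ((hasDerivAt_id φ).const_mul (C ^ 2))
  refine h.congr_deriv ?_
  rw [cosHalfSum, cos_two_mul, cos_sq']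
  ring

theorem cosHalfSum_mul_cos_nonpos (hγ : 0 ≤ γ) (hC : 0 ≤ C) (h : cosHalfSum C γ ≤ 0)
    (hφ : φ ∈ Icc 0 (π / 2)) (hφγ : φ + γ ≤ 3 * π / 2) :
    cosHalfSum (C * cos φ) (φ + γ) ≤ 0 := by
  have hcos : 0 ≤ cos φ := cos_nonneg_of_neg_pi_div_two_le_of_le (by linarith [hφ.1, pi_pos]) hφ.2
  exact cosHalfSum_nonpos_of_coeff_le (mul_nonneg hC hcos)
    (mul_le_of_le_one_right hC (cos_le_one φ)) (add_nonneg hφ.1 hγ) hφγ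
    (cosHalfSum_nonpos_of_le_angle hC hγ (le_add_of_nonneg_left hφ.1) hφγ h)

theorem deriv_totalForce_nonneg (A : ℝ) (hγ : 0 ≤ γ) (hC : 0 ≤ C) (h : cosHalfSum C γ ≤ 0)
    (hφ : φ ∈ Icc 0 (π / 2)) (hφγ : φ + γ ≤ 3 * π / 2) : 0 ≤ deriv (totalForce γ A C) φ := by
  have hsum := cosHalfSum_mul_cos_nonpos hγ hC h hφ hφγ
  have hsin : 0 ≤ sin φ := sin_nonneg_of_nonneg_of_le_pi hφ.1 (by linarith [hφ.2, pi_pos])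
  have hsin_half : 0 ≤ sin ((φ + γ) / 2) :=
    sin_nonneg_of_nonneg_of_le_pi (by linarith [hφ.1]) (by linarith [pi_pos])
  rw [(hasDerivAt_totalForce γ A C φ).deriv]
  exact mul_nonneg zero_le_two (add_nonneg (neg_nonneg.mpr hsum) (by positivity))

theorem deriv_totalForce_pos (A : ℝ) (hγ : 0 ≤ γ) (hC : 0 < C) (h : cosHalfSum C γ ≤ 0)
    (hφ : φ ∈ Ioc 0 (π / 2)) (hφγ : φ + γ ≤ 3 * π / 2) : 0 < deriv (totalForce γ A C) φ := by
  have hsum := cosHalfSum_mul_cos_nonpos hγ hC.le h (Ioc_subset_Icc_self hφ) hφγ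
  have hsin : 0 < sin φ := sin_pos_of_pos_of_lt_pi hφ.1 (by linarith [hφ.2, pi_pos])
  have hsin_half : 0 ≤ sin ((φ + γ) / 2) :=
    sin_nonneg_of_nonneg_of_le_pi (by linarith [hφ.1]) (by linarith [pi_pos])
  rw [(hasDerivAt_totalForce γ A C φ).deriv]
  exact mul_pos two_pos (add_pos_of_nonneg_of_pos (neg_nonneg.mpr hsum) (by positivity))

theorem total_force_deriv_nonneg_obtuse_general (A : ℝ) (hγ : 0 ≤ γ) (hC : 0 < C)
    (hcond : 2 * C * cos (γ / 2) + cos γ ≤ 0) :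
    (∀ φ ∈ Icc 0 (π / 2), φ + γ ≤ 3 * π / 2 → 0 ≤ deriv (totalForce γ A C) φ) ∧
    (∀ φ ∈ Ioc 0 (π / 2), φ + γ ≤ 3 * π / 2 → 0 < deriv (totalForce γ A C) φ) :=
  ⟨fun _ => deriv_totalForce_nonneg A hγ hC.le hcond,
    fun _ => deriv_totalForce_pos A hγ hC hcond⟩

end TotalForce

/-- For `γ ∈ (π/2, π]` and `C > 0` with `2·C·cos(γ/2) + cos γ ≤ 0`, the derivative of the
dimensionless total force is nonnegative on `[0, π/4]` and vanishes there only at `φ = 0`. -/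
theorem total_force_deriv_nonneg_obtuse (γ A C : ℝ)
    (hγ : γ ∈ Set.Ioc (Real.pi / 2) Real.pi) (hA : 0 < A) (hC : 0 < C)
    (hcond : 2 * C * Real.cos (γ / 2) + Real.cos γ ≤ 0)
    (F : ℝ → ℝ)
    (hF : F = fun φ => -A * C ^ 2 - 2 * Real.sin (φ + γ)
      - 4 * C * Real.cos ((φ + γ) / 2) * Real.sin φ
      - (1 / 2) * C ^ 2 * Real.sin (2 * φ) + C ^ 2 * φ) :
    (∀ φ ∈ Set.Icc (0 : ℝ) (Real.pi / 4), 0 ≤ deriv F φ) ∧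
    (∀ φ ∈ Set.Ioc (0 : ℝ) (Real.pi / 4), 0 < deriv F φ) := by
  obtain ⟨hγ₁, hγ₂⟩ := hγ
  have := Real.pi_pos
  obtain ⟨hnonneg, hpos⟩ :=
    total_force_deriv_nonneg_obtuse_general A (by linarith : 0 ≤ γ) hC hcond
  subst hF
  exact ⟨fun φ ⟨hφ₁, hφ₂⟩ => hnonneg φ ⟨hφ₁, by linarith⟩ (by linarith),
    fun φ ⟨hφ₁, hφ₂⟩ => hpos φ ⟨hφ₁, by linarith⟩ (by linarith)⟩
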